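/- For all v, w ∈ ℌ⁰ one has ζ(v)·ζ(w) = ζ(v * w), where * is the stuffle product. In particular, the ℚ-span of all multiple zeta values is a ℚ-algebra. -/

import Mathlib

/-! The truncated sums `Z(k₁,…,k_r; N) = ∑_{N ≥ m₁ > ⋯ > m_r > 0} ∏ mᵢ^{-kᵢ}` (`truncZ`) satisfy the
stuffle relation exactly, for every `N` and all words: splitting the product of two sums over
`a, b < N` according to `b < a`, `a < b`, `a = b` (`sum_mul_sum_split`) yields the three terms of
the recursion defining `*` (`truncLin_st`). No convergence is needed for this step.

For an admissible word, `Z(·; N)` converges to the multiple zeta value as `N → ∞`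
(`tendsto_truncZ`). The truncations exhaust the index set of the nonnegative series, and they are
bounded: by induction `Z(l; N) ≤ 2^{|l|} √(N+1)` for every word (`truncZ_le`), so with a leading
exponent `k ≥ 2` the outer sum is dominated by `∑ m^{-3/2}`.

Since `*` preserves `ℌ⁰` (`st_ofW_mem_H0`), both sides of the truncated relation have a limit when
`v, w ∈ ℌ⁰`, and uniqueness of limits gives `ζ(v) ζ(w) = ζ(v * w)`. The statement about spans follows
because `ζ` maps `ℌ⁰` into the span of the multiple zeta values. -/

/- STATEMENT 2: For all v, w ∈ ℌ⁰ one has ζ(v)·ζ(w) = ζ(v * w), where * is the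
stuffle product. In particular, the ℚ-span of all multiple zeta values is a
ℚ-algebra. Here ℌ¹ = ℚ⟨z₁,z₂,…⟩ is modelled with alphabet ℕ+ (letter k ↦ z_k)
and ℌ⁰ is the span of 𝟏 and words z_{k₁}⋯z_{k_r} with k₁ ≥ 2. -/

noncomputable section

/-- A word in the letters z_k (k ≥ 1) as an element of ℌ¹ = ℚ⟨z₁,z₂,…⟩. -/
def ofW (w : List ℕ+) : MonoidAlgebra ℚ (FreeMonoid ℕ+) :=
  MonoidAlgebra.of ℚ (FreeMonoid ℕ+) (FreeMonoid.ofList w)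

/-- The index list (k₁,…,k_r) is admissible: either empty or k₁ ≥ 2. -/
def Admissible (l : List ℕ+) : Prop := ∀ h : l ≠ [], 2 ≤ (l.head h : ℕ)

/-- The multiple zeta value ζ(k₁,…,k_r) = Σ_{m₁>⋯>m_r>0} 1/(m₁^{k₁}⋯m_r^{k_r}),
as an iterated sum over strictly decreasing tuples of positive integers. -/
def mzv (l : List ℕ+) : ℝ :=
  ∑' m : {m : Fin l.length → ℕ //
      (∀ i j : Fin l.length, i < j → m j < m i) ∧ ∀ i, 0 < m i},
    ∏ i : Fin l.length, ((m.1 i : ℝ) ^ (l.get i : ℕ))⁻¹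

/-- ℌ⁰ ⊂ ℌ¹, the span of 𝟏 and the admissible words. -/
def H0 : Submodule ℚ (MonoidAlgebra ℚ (FreeMonoid ℕ+)) :=
  Submodule.span ℚ {x | ∃ l : List ℕ+, Admissible l ∧ x = ofW l}

/-! ### Truncated sums and their growth -/

/-- The truncated multiple zeta value `∑_{N ≥ m₁ > ⋯ > m_r > 0} ∏ mᵢ^{-kᵢ}`, by recursion on the
index list; the outermost variable is `m₁ = a + 1` with `a < N`. -/
def truncZ : List ℕ+ → ℕ → ℝ
  | [], _ => 1
  | k :: l, N => ∑ a ∈ Finset.range N, (((a : ℝ) + 1) ^ (k : ℕ))⁻¹ * truncZ l a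

lemma truncZ_nonneg (l : List ℕ+) (N : ℕ) : 0 ≤ truncZ l N := by
  induction l generalizing N with
  | nil => simp [truncZ]
  | cons k l ih =>
    exact Finset.sum_nonneg fun a _ => mul_nonneg (by positivity) (ih a)

lemma truncZ_mono (l : List ℕ+) : Monotone (truncZ l) := by
  cases l with
  | nil => intro _ _ _; simp [truncZ]
  | cons k l =>
    intro M N h
    exact Finset.sum_le_sum_of_subset_of_nonneg (Finset.range_mono h)
      fun a _ _ => mul_nonneg (by positivity) (truncZ_nonneg l a)

/-- Comparison with the telescoping sum of `2 (√(a+1) - √a)`. -/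
lemma sum_inv_sqrt_le (N : ℕ) :
    ∑ a ∈ Finset.range N, (√((a : ℝ) + 1))⁻¹ ≤ 2 * √(N : ℝ) := by
  induction N with
  | zero => simp
  | succ n ih =>
    rw [Finset.sum_range_succ]
    push_cast
    have h1 : 0 < √((n : ℝ) + 1) := by positivity
    have h2 := Real.sq_sqrt (show (0 : ℝ) ≤ n + 1 by positivity)
    have h3 := Real.sq_sqrt (show (0 : ℝ) ≤ n by positivity)
    have key : (√((n : ℝ) + 1))⁻¹ ≤ 2 * (√((n : ℝ) + 1) - √(n : ℝ)) := by
      rw [inv_le_iff_one_le_mul₀ h1]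
      nlinarith [sq_nonneg (√((n : ℝ) + 1) - √(n : ℝ))]
    linarith

/-- The exponent `1/2` is reproduced by each summation, so one bound serves all words, including
those with leading letter `z₁`. -/
lemma truncZ_le (l : List ℕ+) (N : ℕ) : truncZ l N ≤ 2 ^ l.length * √((N : ℝ) + 1) := by
  induction l generalizing N with
  | nil => simp [truncZ]
  | cons k l ih =>
    have h : ∀ a : ℕ, (((a : ℝ) + 1) ^ (k : ℕ))⁻¹ * truncZ l a
        ≤ 2 ^ l.length * (√((a : ℝ) + 1))⁻¹ := by
      intro a
      have h0 : (0 : ℝ) < a + 1 := by positivity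
      have hk : (((a : ℝ) + 1) ^ (k : ℕ))⁻¹ ≤ ((a : ℝ) + 1)⁻¹ := by
        gcongr
        exact le_self_pow₀ (by linarith [Nat.cast_nonneg (α := ℝ) a]) k.ne_zero
      calc _ ≤ ((a : ℝ) + 1)⁻¹ * (2 ^ l.length * √((a : ℝ) + 1)) :=
            mul_le_mul hk (ih a) (truncZ_nonneg l a) (by positivity)
        _ = 2 ^ l.length * (√((a : ℝ) + 1))⁻¹ := by
            have h2 := Real.mul_self_sqrt h0.le
            have h1 : 0 < √((a : ℝ) + 1) := by positivity
            nth_rewrite 1 [← h2]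
            field_simp
    calc truncZ (k :: l) N ≤ ∑ a ∈ Finset.range N, 2 ^ l.length * (√((a : ℝ) + 1))⁻¹ :=
          Finset.sum_le_sum fun a _ => h a
      _ = 2 ^ l.length * ∑ a ∈ Finset.range N, (√((a : ℝ) + 1))⁻¹ := by rw [Finset.mul_sum]
      _ ≤ 2 ^ l.length * (2 * √((N : ℝ) + 1)) := by
          gcongr
          refine (sum_inv_sqrt_le N).trans ?_
          gcongr
          linarith
      _ = _ := by simp only [List.length_cons]; ring

/-- With leading exponent at least `2`, the growth bound of `truncZ_le` for the inner sum leaves the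
convergent majorant `∑ (a+1)^{-3/2}`. -/
lemma truncZ_bdd {l : List ℕ+} (hl : Admissible l) : BddAbove (Set.range (truncZ l)) := by
  cases l with
  | nil => exact ⟨1, by rintro _ ⟨N, rfl⟩; simp [truncZ]⟩
  | cons k l =>
    have hk : 2 ≤ (k : ℕ) := by simpa using hl (by simp)
    have hs : Summable fun a : ℕ => (2 : ℝ) ^ l.length * (((a + 1 : ℕ) : ℝ) ^ (3 / 2 : ℝ))⁻¹ :=
      (((summable_nat_add_iff 1).2
        (Real.summable_nat_rpow_inv.2 (by norm_num : (1 : ℝ) < 3 / 2)))).mul_left _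
    refine ⟨∑' a : ℕ, (2 : ℝ) ^ l.length * (((a + 1 : ℕ) : ℝ) ^ (3 / 2 : ℝ))⁻¹, ?_⟩
    rintro _ ⟨N, rfl⟩
    refine le_trans (Finset.sum_le_sum fun a _ => ?_)
      (hs.sum_le_tsum (Finset.range N) fun a _ => by positivity)
    have h0 : (0 : ℝ) < a + 1 := by positivity
    have hk' : (((a : ℝ) + 1) ^ (k : ℕ))⁻¹ ≤ (((a : ℝ) + 1) ^ 2)⁻¹ := by
      gcongr
      linarith [Nat.cast_nonneg (α := ℝ) a]
    calc _ ≤ (((a : ℝ) + 1) ^ 2)⁻¹ * (2 ^ l.length * √((a : ℝ) + 1)) :=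
          mul_le_mul hk' (truncZ_le l a) (truncZ_nonneg l a) (by positivity)
      _ = _ := by
          push_cast
          have h1 : ((a : ℝ) + 1) ^ 2 = ((a : ℝ) + 1) ^ (3 / 2 : ℝ) * √((a : ℝ) + 1) := by
            rw [Real.sqrt_eq_rpow, ← Real.rpow_add h0, ← Real.rpow_natCast]
            norm_num
          rw [h1]
          have : 0 < √((a : ℝ) + 1) := by positivity
          field_simp

/-! ### The truncated sums exhaust the series -/

open Classical in
/-- The summand of `mzv l` extended by zero from the tuples with `N ≥ m₁ > ⋯ > m_r > 0` to all
tuples of natural numbers. -/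
def truncTerm (l : List ℕ+) (N : ℕ) (m : Fin l.length → ℕ) : ℝ :=
  if ((∀ i j, i < j → m j < m i) ∧ ∀ i, 0 < m i) ∧ ∀ i, m i ≤ N then
    ∏ i : Fin l.length, ((m i : ℝ) ^ (l.get i : ℕ))⁻¹ else 0

lemma truncTerm_cons_zero (k : ℕ+) (l : List ℕ+) (N : ℕ) (m : Fin l.length → ℕ) :
    truncTerm (k :: l) N (Fin.cons 0 m : Fin (l.length + 1) → ℕ) = 0 := by
  refine if_neg fun h => ?_
  exact absurd (h.1.2 (0 : Fin (l.length + 1))) (by simp)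

lemma truncTerm_cons_succ (k : ℕ+) (l : List ℕ+) (N a : ℕ) (m : Fin l.length → ℕ) :
    truncTerm (k :: l) N (Fin.cons (a + 1) m : Fin (l.length + 1) → ℕ) =
      if a < N then (((a : ℝ) + 1) ^ (k : ℕ))⁻¹ * truncTerm l a m else 0 := by
  have key : (((∀ i j : Fin (l.length + 1), i < j →
        (Fin.cons (a + 1) m : Fin (l.length + 1) → ℕ) j
          < (Fin.cons (a + 1) m : Fin (l.length + 1) → ℕ) i) ∧
        ∀ i, 0 < (Fin.cons (a + 1) m : Fin (l.length + 1) → ℕ) i) ∧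
        ∀ i, (Fin.cons (a + 1) m : Fin (l.length + 1) → ℕ) i ≤ N) ↔
      (a < N ∧ ((∀ i j, i < j → m j < m i) ∧ ∀ i, 0 < m i) ∧ ∀ i, m i ≤ a) := by
    simp only [Fin.forall_fin_succ, Fin.cons_zero, Fin.cons_succ, Fin.succ_lt_succ_iff,
      Fin.succ_pos, Fin.not_lt_zero, false_imp_iff, true_imp_iff, true_and]
    constructor
    · rintro ⟨⟨⟨h1, h2⟩, h3⟩, h4, h5⟩
      exact ⟨h4, ⟨h2, h3.2⟩, fun i => Nat.lt_succ_iff.1 (h1 i)⟩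
    · rintro ⟨h4, ⟨h2, h3⟩, h5⟩
      exact ⟨⟨⟨fun i => Nat.lt_succ_iff.2 (h5 i), h2⟩, Nat.succ_pos a, h3⟩, h4,
        fun i => (h5 i).trans h4.le⟩
  by_cases ha : a < N
  · rw [if_pos ha]
    by_cases hm : ((∀ i j, i < j → m j < m i) ∧ ∀ i, 0 < m i) ∧ ∀ i, m i ≤ a
    · refine (if_pos (key.2 ⟨ha, hm⟩)).trans ?_
      rw [truncTerm, if_pos hm]
      refine (Fin.prod_univ_succ (n := l.length) _).trans ?_
      simp
    · refine (if_neg fun h => hm (key.1 h).2).trans ?_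
      rw [truncTerm, if_neg hm, mul_zero]
  · rw [if_neg ha]
    exact if_neg fun h => ha (key.1 h).1

/-- For each `N` this is a finite sum in disguise; it is proved by peeling off the first entry of the
tuple, matching the recursion of `truncZ`. -/
lemma hasSum_truncTerm (l : List ℕ+) (N : ℕ) : HasSum (truncTerm l N) (truncZ l N) := by
  induction l generalizing N with
  | nil =>
    have h : truncTerm [] N default = truncZ [] N := by
      refine (if_pos ⟨⟨fun i => i.elim0, fun i => i.elim0⟩, fun i => i.elim0⟩).trans ?_
      simp [truncZ]
    rw [← h]
    exact @hasSum_unique ℝ (Fin 0 → ℕ) _ _ _ (truncTerm [] N) _ _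
  | cons k l ih =>
    -- The tuples are sorted by the value `a + 1` of their first entry.
    have hdec : truncTerm (k :: l) N = fun m : Fin (l.length + 1) → ℕ =>
        ∑ a ∈ Finset.range N, if m 0 = a + 1 then
          (((a : ℝ) + 1) ^ (k : ℕ))⁻¹ * truncTerm l a (Fin.tail m) else 0 := by
      funext m
      refine Fin.consCases (fun b m' => ?_) m
      cases b with
      | zero =>
        refine (truncTerm_cons_zero k l N m').trans ?_
        simp [eq_comm]
      | succ a =>
        refine (truncTerm_cons_succ k l N a m').trans ?_
        simp
    rw [hdec]
    refine hasSum_sum fun a _ => ?_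
    have hinj : Function.Injective
        (fun m : Fin l.length → ℕ => (Fin.cons (a + 1) m : Fin (l.length + 1) → ℕ)) :=
      fun _ _ h => (Fin.cons_inj.1 h).2
    refine (hinj.hasSum_iff ?_).1 ?_
    · intro m hm
      refine if_neg fun h => hm ⟨Fin.tail m, ?_⟩
      simp only [← h]
      exact Fin.cons_self_tail m
    · refine HasSum.congr_fun ((ih a).mul_left (((a : ℝ) + 1) ^ (k : ℕ))⁻¹) ?_
      intro m
      simp

/-- Monotone convergence for series: `f` is exhausted by the truncations `g N`, whose sums `Z N`
increase to `c`. -/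
lemma hasSum_of_exhaustion {α : Type*} {f : α → ℝ} {g : ℕ → α → ℝ} {Z : ℕ → ℝ} {c : ℝ}
    (hf : ∀ x, 0 ≤ f x) (hg : ∀ N, HasSum (g N) (Z N)) (hg0 : ∀ N x, 0 ≤ g N x)
    (hgf : ∀ N x, g N x ≤ f x) (hev : ∀ x, ∀ᶠ N in Filter.atTop, g N x = f x)
    (hmono : Monotone Z) (hZ : Filter.Tendsto Z Filter.atTop (nhds c)) : HasSum f c := by
  refine hasSum_of_isLUB_of_nonneg c hf ⟨?_, ?_⟩
  · rintro _ ⟨s, rfl⟩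
    obtain ⟨N, hN⟩ := ((Filter.eventually_all_finset s).2 fun x _ => hev x).exists
    calc ∑ x ∈ s, f x = ∑ x ∈ s, g N x := Finset.sum_congr rfl fun x hx => (hN x hx).symm
      _ ≤ Z N := sum_le_hasSum s (fun x _ => hg0 N x) (hg N)
      _ ≤ c := hmono.ge_of_tendsto hZ N
  · intro b hb
    refine le_of_tendsto' hZ fun N => hasSum_le_of_sum_le (hg N) fun s => ?_
    exact (Finset.sum_le_sum fun x _ => hgf N x).trans (hb ⟨s, rfl⟩)

open Classical in
lemma tendsto_truncZ {l : List ℕ+} (hl : Admissible l) :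
    Filter.Tendsto (truncZ l) Filter.atTop (nhds (mzv l)) := by
  have hlim := tendsto_atTop_ciSup (truncZ_mono l) (truncZ_bdd hl)
  let S : Set (Fin l.length → ℕ) := {m | (∀ i j, i < j → m j < m i) ∧ ∀ i, 0 < m i}
  let f : (Fin l.length → ℕ) → ℝ := fun m => ∏ i : Fin l.length, ((m i : ℝ) ^ (l.get i : ℕ))⁻¹
  have hf : ∀ m, 0 ≤ f m := fun m => Finset.prod_nonneg fun i _ => by positivity
  have hterm : ∀ N m, truncTerm l N m = if m ∈ S ∧ ∀ i, m i ≤ N then f m else 0 :=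
    fun N m => rfl
  have hsum : HasSum (S.indicator f) (⨆ N, truncZ l N) := by
    refine hasSum_of_exhaustion (Set.indicator_nonneg fun m _ => hf m) (hasSum_truncTerm l)
      ?_ ?_ ?_ (truncZ_mono l) hlim
    · intro N m
      rw [hterm]
      split_ifs
      exacts [hf m, le_rfl]
    · intro N m
      rw [hterm]
      split_ifs with h
      · rw [Set.indicator_of_mem h.1]
      · exact Set.indicator_nonneg (fun m _ => hf m) m
    · intro m
      filter_upwards [Filter.eventually_ge_atTop (∑ i, m i)] with N hN
      have hle : ∀ i, m i ≤ N := fun i =>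
        (Finset.single_le_sum (f := m) (fun _ _ => Nat.zero_le _) (Finset.mem_univ i)).trans hN
      rw [hterm, Set.indicator_apply]
      simp [hle]
  have hm : mzv l = ⨆ N, truncZ l N := (hasSum_subtype_iff_indicator.2 hsum).tsum_eq
  rw [hm]
  exact hlim

/-! ### The stuffle relation for truncated sums -/

/-- The linear extension of `truncZ · N` to all of `ℌ¹`. -/
def truncLin (N : ℕ) : MonoidAlgebra ℚ (FreeMonoid ℕ+) →ₗ[ℚ] ℝ :=
  (MonoidAlgebra.basis (FreeMonoid ℕ+) ℚ).constr ℚ fun w => truncZ w.toList N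

lemma truncLin_ofW (N : ℕ) (l : List ℕ+) : truncLin N (ofW l) = truncZ l N := by
  have h := (MonoidAlgebra.basis (FreeMonoid ℕ+) ℚ).constr_basis ℚ
    (fun w => truncZ w.toList N) (FreeMonoid.ofList l)
  rw [MonoidAlgebra.basis_apply] at h
  exact h

lemma ofW_nil : ofW [] = 1 := map_one (MonoidAlgebra.of ℚ (FreeMonoid ℕ+))

lemma ofW_cons (k : ℕ+) (l : List ℕ+) : ofW (k :: l) = ofW [k] * ofW l :=
  map_mul (MonoidAlgebra.of ℚ (FreeMonoid ℕ+)) (FreeMonoid.ofList [k]) (FreeMonoid.ofList l)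

lemma span_ofW : Submodule.span ℚ (Set.range ofW) = ⊤ := by
  have h := (MonoidAlgebra.basis (FreeMonoid ℕ+) ℚ).span_eq
  rw [← h]
  congr 1

lemma truncLin_letter_mul (N : ℕ) (k : ℕ+) (x : MonoidAlgebra ℚ (FreeMonoid ℕ+)) :
    truncLin N (ofW [k] * x) =
      ∑ a ∈ Finset.range N, (((a : ℝ) + 1) ^ (k : ℕ))⁻¹ * truncLin a x := by
  have hx : x ∈ Submodule.span ℚ (Set.range ofW) := by rw [span_ofW]; trivial
  induction hx using Submodule.span_induction with
  | mem x h =>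
    obtain ⟨l, rfl⟩ := h
    simp only [← ofW_cons, truncLin_ofW, truncZ]
  | zero => simp
  | add x y _ _ hx hy => simp only [mul_add, map_add, hx, hy, Finset.sum_add_distrib]
  | smul c x _ hx =>
    simp only [mul_smul_comm, map_smul, hx, Finset.smul_sum]

/-- A product of two sums over `a, b < N`, split according to `b < a`, `a < b` and `a = b`. -/
lemma sum_mul_sum_split (f g : ℕ → ℝ) (N : ℕ) :
    (∑ a ∈ Finset.range N, f a) * ∑ b ∈ Finset.range N, g b =
      ∑ a ∈ Finset.range N, f a * ∑ b ∈ Finset.range a, g b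
      + ∑ b ∈ Finset.range N, g b * ∑ a ∈ Finset.range b, f a
      + ∑ a ∈ Finset.range N, f a * g a := by
  induction N with
  | zero => simp
  | succ n ih =>
    simp only [Finset.sum_range_succ]
    linear_combination ih

/-- The stuffle relation holds exactly at every truncation level, with no admissibility assumption. -/
lemma truncLin_st
    (st : MonoidAlgebra ℚ (FreeMonoid ℕ+) →ₗ[ℚ]
        MonoidAlgebra ℚ (FreeMonoid ℕ+) →ₗ[ℚ] MonoidAlgebra ℚ (FreeMonoid ℕ+))
    (hst_one : ∀ x, st 1 x = x) (hst_one' : ∀ x, st x 1 = x)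
    (hst : ∀ (i j : ℕ+) (w v : List ℕ+),
      st (ofW (i :: w)) (ofW (j :: v)) =
        ofW [i] * st (ofW w) (ofW (j :: v))
        + ofW [j] * st (ofW (i :: w)) (ofW v)
        + ofW [i + j] * st (ofW w) (ofW v))
    (w v : List ℕ+) (N : ℕ) :
    truncLin N (st (ofW w) (ofW v)) = truncZ w N * truncZ v N := by
  induction w generalizing v N with
  | nil => rw [ofW_nil, hst_one, truncLin_ofW, truncZ, one_mul]
  | cons i w ihw =>
    induction v generalizing N with
    | nil => rw [ofW_nil, hst_one', truncLin_ofW]; simp [truncZ]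
    | cons j v ihv =>
      rw [hst, map_add, map_add]
      simp only [truncLin_letter_mul, ihw, ihv]
      simp only [truncZ]
      rw [sum_mul_sum_split]
      congr 1
      · congr 1
        · exact Finset.sum_congr rfl fun a _ => by ring
        · exact Finset.sum_congr rfl fun a _ => by ring
      · refine Finset.sum_congr rfl fun a _ => ?_
        rw [PNat.add_coe, pow_add, mul_inv]
        ring

/-! ### Passage to the limit on `ℌ⁰` -/

lemma letter_mul_mem_H0 {k : ℕ+} (hk : 2 ≤ (k : ℕ)) (x : MonoidAlgebra ℚ (FreeMonoid ℕ+)) :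
    ofW [k] * x ∈ H0 := by
  have hx : x ∈ Submodule.span ℚ (Set.range ofW) := by rw [span_ofW]; trivial
  induction hx using Submodule.span_induction with
  | mem x h =>
    obtain ⟨l, rfl⟩ := h
    exact Submodule.subset_span ⟨k :: l, fun _ => hk, (ofW_cons k l).symm⟩
  | zero => simp
  | add x y _ _ hx hy => rw [mul_add]; exact H0.add_mem hx hy
  | smul c x _ hx => rw [mul_smul_comm]; exact H0.smul_mem c hx

lemma ofW_mem_H0 {l : List ℕ+} (hl : Admissible l) : ofW l ∈ H0 :=
  Submodule.subset_span ⟨l, hl, rfl⟩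

lemma st_ofW_mem_H0
    (st : MonoidAlgebra ℚ (FreeMonoid ℕ+) →ₗ[ℚ]
        MonoidAlgebra ℚ (FreeMonoid ℕ+) →ₗ[ℚ] MonoidAlgebra ℚ (FreeMonoid ℕ+))
    (hst_one : ∀ x, st 1 x = x) (hst_one' : ∀ x, st x 1 = x)
    (hst : ∀ (i j : ℕ+) (w v : List ℕ+),
      st (ofW (i :: w)) (ofW (j :: v)) =
        ofW [i] * st (ofW w) (ofW (j :: v))
        + ofW [j] * st (ofW (i :: w)) (ofW v)
        + ofW [i + j] * st (ofW w) (ofW v))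
    {w v : List ℕ+} (hw : Admissible w) (hv : Admissible v) :
    st (ofW w) (ofW v) ∈ H0 := by
  cases w with
  | nil => rw [ofW_nil, hst_one]; exact ofW_mem_H0 hv
  | cons i w =>
    cases v with
    | nil => rw [ofW_nil, hst_one']; exact ofW_mem_H0 hw
    | cons j v =>
      have hi : 2 ≤ (i : ℕ) := hw (by simp)
      have hj : 2 ≤ (j : ℕ) := hv (by simp)
      rw [hst]
      refine H0.add_mem (H0.add_mem ?_ ?_) ?_
      · exact letter_mul_mem_H0 hi _
      · exact letter_mul_mem_H0 hj _
      · exact letter_mul_mem_H0 (by rw [PNat.add_coe]; omega) _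

lemma tendsto_truncLin (zeta : MonoidAlgebra ℚ (FreeMonoid ℕ+) →ₗ[ℚ] ℝ)
    (hzeta : ∀ l : List ℕ+, Admissible l → zeta (ofW l) = mzv l)
    {x : MonoidAlgebra ℚ (FreeMonoid ℕ+)} (hx : x ∈ H0) :
    Filter.Tendsto (fun N => truncLin N x) Filter.atTop (nhds (zeta x)) := by
  unfold H0 at hx
  induction hx using Submodule.span_induction with
  | mem x h =>
    obtain ⟨l, hl, rfl⟩ := h
    simp only [truncLin_ofW, hzeta l hl]
    exact tendsto_truncZ hl
  | zero => simp
  | add x y _ _ hx hy => simpa only [map_add] using hx.add hy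
  | smul c x _ hx => simpa only [map_smul] using hx.const_smul c

lemma zeta_mem_span (zeta : MonoidAlgebra ℚ (FreeMonoid ℕ+) →ₗ[ℚ] ℝ)
    (hzeta : ∀ l : List ℕ+, Admissible l → zeta (ofW l) = mzv l)
    {x : MonoidAlgebra ℚ (FreeMonoid ℕ+)} (hx : x ∈ H0) :
    zeta x ∈ Submodule.span ℚ {r : ℝ | ∃ l, Admissible l ∧ r = mzv l} := by
  have h : H0 ≤ (Submodule.span ℚ {r : ℝ | ∃ l, Admissible l ∧ r = mzv l}).comap zeta := by
    refine Submodule.span_le.2 ?_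
    rintro _ ⟨l, hl, rfl⟩
    exact Submodule.subset_span ⟨l, hl, hzeta l hl⟩
  exact h hx

theorem zeta_stuffle_hom
    -- the stuffle product * : a ℚ-bilinear product on ℌ¹ ...
    (st : MonoidAlgebra ℚ (FreeMonoid ℕ+) →ₗ[ℚ]
        MonoidAlgebra ℚ (FreeMonoid ℕ+) →ₗ[ℚ] MonoidAlgebra ℚ (FreeMonoid ℕ+))
    -- ... satisfying 𝟏 * x = x * 𝟏 = x ...
    (hst_one : ∀ x, st 1 x = x) (hst_one' : ∀ x, st x 1 = x)
    -- ... and z_i w * z_j v = z_i(w * z_j v) + z_j(z_i w * v) + z_{i+j}(w * v)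
    (hst : ∀ (i j : ℕ+) (w v : List ℕ+),
      st (ofW (i :: w)) (ofW (j :: v)) =
        ofW [i] * st (ofW w) (ofW (j :: v))
        + ofW [j] * st (ofW (i :: w)) (ofW v)
        + ofW [i + j] * st (ofW w) (ofW v))
    -- ζ : ℌ⁰ → ℝ, the ℚ-linear map with ζ(z_{k₁}⋯z_{k_r}) = ζ(k₁,…,k_r)
    (zeta : MonoidAlgebra ℚ (FreeMonoid ℕ+) →ₗ[ℚ] ℝ)
    (hzeta : ∀ l : List ℕ+, Admissible l → zeta (ofW l) = mzv l) :
    -- conclusion: ζ(v)ζ(w) = ζ(v * w) for v, w ∈ ℌ⁰, and in particular the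
    -- ℚ-span of all multiple zeta values is closed under multiplication
    (∀ v ∈ H0, ∀ w ∈ H0, zeta v * zeta w = zeta (st v w))
    ∧ (∀ x y : ℝ,
        x ∈ Submodule.span ℚ {r : ℝ | ∃ l, Admissible l ∧ r = mzv l} →
        y ∈ Submodule.span ℚ {r : ℝ | ∃ l, Admissible l ∧ r = mzv l} →
        x * y ∈ Submodule.span ℚ {r : ℝ | ∃ l, Admissible l ∧ r = mzv l}) := by
  have hword : ∀ w v : List ℕ+, Admissible w → Admissible v →
      mzv w * mzv v = zeta (st (ofW w) (ofW v)) := by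
    intro w v hw hv
    have h1 := tendsto_truncLin zeta hzeta (st_ofW_mem_H0 st hst_one hst_one' hst hw hv)
    simp only [truncLin_st st hst_one hst_one' hst] at h1
    exact tendsto_nhds_unique ((tendsto_truncZ hw).mul (tendsto_truncZ hv)) h1
  constructor
  · intro v hv w hw
    unfold H0 at hv hw
    induction hv, hw using Submodule.span_induction₂ with
    | mem_mem x y hx hy =>
      obtain ⟨l, hl, rfl⟩ := hx
      obtain ⟨l', hl', rfl⟩ := hy
      rw [hzeta l hl, hzeta l' hl', hword l l' hl hl']
    | zero_left y _ => simp
    | zero_right x _ => simp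
    | add_left x y z _ _ _ h1 h2 => simp only [map_add, LinearMap.add_apply, add_mul, h1, h2]
    | add_right x y z _ _ _ h1 h2 => simp only [map_add, mul_add, h1, h2]
    | smul_left r x y _ _ h => simp only [map_smul, LinearMap.smul_apply, smul_mul_assoc, h]
    | smul_right r x y _ _ h => simp only [map_smul, mul_smul_comm, h]
  · intro x y hx hy
    induction hx, hy using Submodule.span_induction₂ with
    | mem_mem x y hx hy =>
      obtain ⟨l, hl, rfl⟩ := hx
      obtain ⟨l', hl', rfl⟩ := hy
      rw [hword l l' hl hl']
      exact zeta_mem_span zeta hzeta (st_ofW_mem_H0 st hst_one hst_one' hst hl hl')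
    | zero_left y _ => simp
    | zero_right x _ => simp
    | add_left x y z _ _ _ h1 h2 => rw [add_mul]; exact Submodule.add_mem _ h1 h2
    | add_right x y z _ _ _ h1 h2 => rw [mul_add]; exact Submodule.add_mem _ h1 h2
    | smul_left r x y _ _ h => rw [smul_mul_assoc]; exact Submodule.smul_mem _ r h
    | smul_right r x y _ _ h => rw [mul_smul_comm]; exact Submodule.smul_mem _ r h
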